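/- Let L, N be a lightlike frame along the unit-speed spacelike curve γ̂ with α_L nowhere zero on I. Then the derivative of the singular value curve u ↦ γ̂(u) + L(u)/α_L(u) of the osculating lightlike surface equals −(σ_L(u)/α_L(u)²) L(u); consequently this curve is constant (equal to a single point V_L) if and only if σ_L ≡ 0 on I, and in that case ⟨γ̂(u) − V_L, γ̂(u) − V_L⟩ = 0 for all u, i.e. γ̂ lies on the lightcone with vertex V_L. The analogous statements hold for u ↦ γ̂(u) + N(u)/α_N(u) with σ_N in place of σ_L when α_N is nowhere zero. -/

import Mathlib

open scoped Topology

noncomputable section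

/-- Points/vectors of Lorentz–Minkowski 3-space `ℝ³₁`. -/
abbrev R3 : Type := Fin 3 → ℝ

/-- The Lorentz–Minkowski scalar product `⟨x,y⟩ = -x₀y₀ + x₁y₁ + x₂y₂`. -/
def mink (x y : R3) : ℝ := -(x 0 * y 0) + x 1 * y 1 + x 2 * y 2

/-- `(L, N)` is a lightlike frame along the unit-speed spacelike curve `γ` on `I`:
`γ, L, N` are smooth on `I`, `⟨e,e⟩ = 1` (with `e = γ'`), `⟨e,L⟩ = ⟨e,N⟩ = 0`,
`⟨L,L⟩ = ⟨N,N⟩ = 0` and `⟨L,N⟩ = 1` on `I`. -/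
structure LightlikeFrame (I : Set ℝ) (γ L N : ℝ → R3) : Prop where
  smooth_gamma : ContDiffOn ℝ (⊤ : ℕ∞) γ I
  smooth_L : ContDiffOn ℝ (⊤ : ℕ∞) L I
  smooth_N : ContDiffOn ℝ (⊤ : ℕ∞) N I
  unit_speed : ∀ u ∈ I, mink (deriv γ u) (deriv γ u) = 1
  eL : ∀ u ∈ I, mink (deriv γ u) (L u) = 0
  eN : ∀ u ∈ I, mink (deriv γ u) (N u) = 0
  LL : ∀ u ∈ I, mink (L u) (L u) = 0
  NN : ∀ u ∈ I, mink (N u) (N u) = 0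
  LN : ∀ u ∈ I, mink (L u) (N u) = 1

/-- `α_L = ⟨γ'', L⟩`. -/
def alphaL (γ L : ℝ → R3) (u : ℝ) : ℝ := mink (deriv (deriv γ) u) (L u)

/-- `α_N = ⟨γ'', N⟩`. -/
def alphaN (γ N : ℝ → R3) (u : ℝ) : ℝ := mink (deriv (deriv γ) u) (N u)

/-- `α_G = ⟨L, N'⟩`. -/
def alphaG (L N : ℝ → R3) (u : ℝ) : ℝ := mink (L u) (deriv N u)

/-- `σ_L = α_L' + α_L α_G`. -/
def sigmaL (γ L N : ℝ → R3) (u : ℝ) : ℝ :=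
  deriv (alphaL γ L) u + alphaL γ L u * alphaG L N u

/-- `σ_N = α_N' - α_N α_G`. -/
def sigmaN (γ L N : ℝ → R3) (u : ℝ) : ℝ :=
  deriv (alphaN γ N) u - alphaN γ N u * alphaG L N u

/-!
Writing `e = γ'`, the expansion of `L'` in the pseudo-orthonormal basis `e, L, N` is
`L' = -α_L e - α_G L`. In the derivative of `γ + L / α_L` the two terms along `e` therefore cancel
and `-(σ_L / α_L²) L` remains, where `L` never vanishes. If the curve stays at a point `V`, then
`γ - V = -L / α_L` is lightlike. Interchanging `L` and `N` changes the sign of `α_G`, hence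
exchanges `σ_L` and `σ_N`.
-/

section DualFamilies

variable {ι K V : Type*} [Fintype ι] [Nonempty ι] [Field K] [AddCommGroup V] [Module K V]

theorem sum_dual_smul_eq_self {v : ι → V} {f : ι → Module.Dual K V}
    (hcard : Fintype.card ι = Module.finrank K V) (hne : Pairwise fun i j => f i (v j) = 0)
    (heq : ∀ i, f i (v i) = 1) (x : V) : ∑ i, f i x • v i = x := by
  have hspan : Submodule.span K (Set.range v) = ⊤ :=
    (LinearIndependent.of_pairwise_dual_eq_zero_one v f hne heq).span_eq_top_of_card_eq_finrank
      hcard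
  obtain ⟨c, rfl⟩ : ∃ c : ι → K, ∑ i, c i • v i = x := by
    rw [← Submodule.mem_span_range_iff_exists_fun, hspan]
    exact Submodule.mem_top
  refine Finset.sum_congr rfl fun i _ => ?_
  have hi : f i (∑ j, c j • v j) = c i := by
    simp only [map_sum, map_smul, smul_eq_mul]
    rw [Finset.sum_eq_single i (fun j _ hji => by rw [hne hji.symm, mul_zero]) (by simp), heq,
      mul_one]
  rw [hi]

end DualFamilies

section Calculus

variable {𝕜 E F G : Type*}

theorem bilinear_deriv_right_eq_neg [NontriviallyNormedField 𝕜]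
    [NormedAddCommGroup E] [NormedSpace 𝕜 E] [NormedAddCommGroup F] [NormedSpace 𝕜 F]
    [NormedAddCommGroup G] [NormedSpace 𝕜 G] (B : E →L[𝕜] F →L[𝕜] G) {s : Set 𝕜} {f : 𝕜 → E}
    {g : 𝕜 → F} {c : G} {u : 𝕜} (hs : IsOpen s) (hu : u ∈ s) (hf : DifferentiableAt 𝕜 f u)
    (hg : DifferentiableAt 𝕜 g u) (hc : ∀ t ∈ s, B (f t) (g t) = c) :
    B (f u) (deriv g u) = -B (deriv f u) (g u) := by
  have hderiv : deriv (fun t => B (f t) (g t)) u = 0 := by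
    simpa using Set.EqOn.deriv (g := fun _ => c) hc hs hu
  rw [← add_eq_zero_iff_eq_neg, ← hderiv]
  exact (B.hasDerivAt_of_bilinear (fun _ => hf.hasDerivAt) (fun _ => hg.hasDerivAt)).deriv.symm

theorem exists_forall_mem_eq_const_iff_deriv_eq_zero [RCLike 𝕜] [NormedAddCommGroup E]
    [NormedSpace 𝕜 E] {s : Set 𝕜} {f : 𝕜 → E} (hs : IsOpen s) (hconn : IsPreconnected s)
    (hf : DifferentiableOn 𝕜 f s) :
    (∃ c, ∀ u ∈ s, f u = c) ↔ ∀ u ∈ s, deriv f u = 0 := by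
  refine ⟨?_, fun h => hs.exists_is_const_of_deriv_eq_zero hconn hf h⟩
  rintro ⟨c, hc⟩ u hu
  simpa using Set.EqOn.deriv (g := fun _ => c) hc hs hu

end Calculus

section LorentzProduct

theorem mink_comm (x y : R3) : mink x y = mink y x := by
  simp only [mink]
  ring

/-- The scalar product `mink` as a continuous bilinear form, which gives access to the library's
linear algebra and product rule. -/
def minkForm : R3 →L[ℝ] R3 →L[ℝ] ℝ :=
  (LinearMap.mk₂ ℝ mink
    (fun x y z => by simp only [mink, Pi.add_apply]; ring)
    (fun c x y => by simp only [mink, Pi.smul_apply, smul_eq_mul]; ring)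
    (fun x y z => by simp only [mink, Pi.add_apply]; ring)
    (fun c x y => by simp only [mink, Pi.smul_apply, smul_eq_mul]; ring)).toContinuousBilinearMap

theorem minkForm_apply (x y : R3) : minkForm x y = mink x y := rfl

theorem mink_smul_self (c : ℝ) (x : R3) : mink (c • x) (c • x) = c ^ 2 * mink x x := by
  simp only [← minkForm_apply, map_smul, smul_apply, smul_eq_mul]
  ring

end LorentzProduct

/-- The singular value curve `u ↦ γ(u) + L(u) / α_L(u)` of the osculating lightlike surface of `γ`
in the direction of `L`. Since `alphaN` is `alphaL` for the other lightlike direction, the curve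
`u ↦ γ(u) + N(u) / α_N(u)` is `singularValueCurve γ N`. Where `α_L(u) = 0` the value is `γ(u)`. -/
def singularValueCurve (γ L : ℝ → R3) (u : ℝ) : R3 := γ u + (alphaL γ L u)⁻¹ • L u

namespace LightlikeFrame

variable {I : Set ℝ} {γ L N : ℝ → R3} {u : ℝ}

theorem swap (h : LightlikeFrame I γ L N) : LightlikeFrame I γ N L where
  smooth_gamma := h.smooth_gamma
  smooth_L := h.smooth_N
  smooth_N := h.smooth_L
  unit_speed := h.unit_speed
  eL := h.eN
  eN := h.eL
  LL := h.NN
  NN := h.LL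
  LN u hu := by rw [mink_comm, h.LN u hu]

theorem L_ne_zero (h : LightlikeFrame I γ L N) (hu : u ∈ I) : L u ≠ 0 := by
  intro hL
  simpa [hL, mink] using h.LN u hu

theorem mink_expansion (h : LightlikeFrame I γ L N) (hu : u ∈ I) (x : R3) :
    mink (deriv γ u) x • deriv γ u + mink (N u) x • L u + mink (L u) x • N u = x := by
  let v : Fin 3 → R3 := ![deriv γ u, L u, N u]
  let f : Fin 3 → Module.Dual ℝ R3 :=
    ![minkForm (deriv γ u), minkForm (N u), minkForm (L u)]
  have hne : Pairwise fun i j => f i (v j) = 0 := by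
    intro i j hij
    fin_cases i <;> fin_cases j <;>
      simp_all [v, f, minkForm_apply, h.eL u hu, h.eN u hu, h.LL u hu, h.NN u hu,
        mink_comm _ (deriv γ u)]
  have heq (i : Fin 3) : f i (v i) = 1 := by
    fin_cases i <;>
      simp [v, f, minkForm_apply, h.unit_speed u hu, h.LN u hu, h.swap.LN u hu]
  simpa [v, f, minkForm_apply, Fin.sum_univ_three] using
    sum_dual_smul_eq_self (by simp) hne heq x

theorem differentiableAt_gamma (h : LightlikeFrame I γ L N) (hI : IsOpen I) (hu : u ∈ I) :
    DifferentiableAt ℝ γ u :=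
  (h.smooth_gamma.contDiffAt (hI.mem_nhds hu)).differentiableAt (by simp)

theorem differentiableAt_L (h : LightlikeFrame I γ L N) (hI : IsOpen I) (hu : u ∈ I) :
    DifferentiableAt ℝ L u :=
  (h.smooth_L.contDiffAt (hI.mem_nhds hu)).differentiableAt (by simp)

theorem contDiffOn_deriv_gamma (h : LightlikeFrame I γ L N) (hI : IsOpen I) :
    ContDiffOn ℝ (⊤ : ℕ∞) (deriv γ) I :=
  h.smooth_gamma.deriv_of_isOpen hI (by simp)

theorem differentiableAt_deriv_gamma (h : LightlikeFrame I γ L N) (hI : IsOpen I) (hu : u ∈ I) :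
    DifferentiableAt ℝ (deriv γ) u :=
  ((h.contDiffOn_deriv_gamma hI).contDiffAt (hI.mem_nhds hu)).differentiableAt (by simp)

theorem differentiableAt_alphaL (h : LightlikeFrame I γ L N) (hI : IsOpen I) (hu : u ∈ I) :
    DifferentiableAt ℝ (alphaL γ L) u := by
  have hsmooth : ContDiffOn ℝ (⊤ : ℕ∞) (deriv (deriv γ)) I :=
    (h.contDiffOn_deriv_gamma hI).deriv_of_isOpen hI (by simp)
  have hderiv : DifferentiableAt ℝ (deriv (deriv γ)) u :=
    (hsmooth.contDiffAt (hI.mem_nhds hu)).differentiableAt (by simp)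
  exact (minkForm.differentiableAt.comp u hderiv).clm_apply (h.differentiableAt_L hI hu)

theorem mink_deriv_gamma_deriv_L (h : LightlikeFrame I γ L N) (hI : IsOpen I) (hu : u ∈ I) :
    mink (deriv γ u) (deriv L u) = -alphaL γ L u :=
  bilinear_deriv_right_eq_neg minkForm hI hu (h.differentiableAt_deriv_gamma hI hu)
    (h.differentiableAt_L hI hu) h.eL

theorem mink_L_deriv_L (h : LightlikeFrame I γ L N) (hI : IsOpen I) (hu : u ∈ I) :
    mink (L u) (deriv L u) = 0 := by
  have hL := h.differentiableAt_L hI hu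
  have hneg : mink (L u) (deriv L u) = -mink (deriv L u) (L u) :=
    bilinear_deriv_right_eq_neg minkForm hI hu hL hL h.LL
  rwa [mink_comm (deriv L u), self_eq_neg] at hneg

theorem alphaG_swap (h : LightlikeFrame I γ L N) (hI : IsOpen I) (hu : u ∈ I) :
    alphaG N L u = -alphaG L N u := by
  rw [alphaG, alphaG, mink_comm (L u)]
  exact bilinear_deriv_right_eq_neg minkForm hI hu (h.swap.differentiableAt_L hI hu)
    (h.differentiableAt_L hI hu) h.swap.LN

theorem sigmaL_swap (h : LightlikeFrame I γ L N) (hI : IsOpen I) (hu : u ∈ I) :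
    sigmaL γ N L u = sigmaN γ L N u := by
  rw [sigmaL, h.alphaG_swap hI hu, mul_neg, ← sub_eq_add_neg]
  rfl

theorem deriv_L_eq (h : LightlikeFrame I γ L N) (hI : IsOpen I) (hu : u ∈ I) :
    deriv L u = -(alphaL γ L u • deriv γ u) - alphaG L N u • L u := by
  have hN : mink (N u) (deriv L u) = -alphaG L N u := h.alphaG_swap hI hu
  rw [← h.mink_expansion hu (deriv L u), h.mink_deriv_gamma_deriv_L hI hu, hN,
    h.mink_L_deriv_L hI hu]
  module

theorem hasDerivAt_singularValueCurve (h : LightlikeFrame I γ L N) (hI : IsOpen I) (hu : u ∈ I)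
    (hα : alphaL γ L u ≠ 0) :
    HasDerivAt (singularValueCurve γ L) (-(sigmaL γ L N u / alphaL γ L u ^ 2) • L u) u := by
  have hαinv := (h.differentiableAt_alphaL hI hu).hasDerivAt.inv hα
  refine ((h.differentiableAt_gamma hI hu).hasDerivAt.add
    (hαinv.smul (h.differentiableAt_L hI hu).hasDerivAt)).congr_deriv ?_
  rw [h.deriv_L_eq hI hu, sigmaL, Pi.inv_apply]
  match_scalars <;> field_simp <;> ring

theorem singularValueCurve_eq_const_iff (h : LightlikeFrame I γ L N) (hI : IsOpen I)
    (hconn : IsPreconnected I) (hα : ∀ u ∈ I, alphaL γ L u ≠ 0) :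
    (∃ V, ∀ u ∈ I, singularValueCurve γ L u = V) ↔ ∀ u ∈ I, sigmaL γ L N u = 0 := by
  have hderiv (u : ℝ) (hu : u ∈ I) := h.hasDerivAt_singularValueCurve hI hu (hα u hu)
  rw [exists_forall_mem_eq_const_iff_deriv_eq_zero hI hconn fun u hu =>
    (hderiv u hu).differentiableAt.differentiableWithinAt]
  refine forall₂_congr fun u hu => ?_
  simp [(hderiv u hu).deriv, h.L_ne_zero hu, hα u hu]

theorem mink_sub_singularValueCurve (h : LightlikeFrame I γ L N) (hu : u ∈ I) :
    mink (γ u - singularValueCurve γ L u) (γ u - singularValueCurve γ L u) = 0 := by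
  have hsub : γ u - singularValueCurve γ L u = (-(alphaL γ L u)⁻¹) • L u := by
    rw [singularValueCurve]
    module
  rw [hsub, mink_smul_self, h.LL u hu, mul_zero]

end LightlikeFrame

theorem singular_value_curve_and_lightcone_general {I : Set ℝ} (hI : IsOpen I)
    (hconn : IsPreconnected I) {γ L N : ℝ → R3} (hframe : LightlikeFrame I γ L N) :
    ((∀ u ∈ I, alphaL γ L u ≠ 0) →
      (∀ u ∈ I, deriv (singularValueCurve γ L) u =
        -(sigmaL γ L N u / alphaL γ L u ^ 2) • L u) ∧
      ((∃ V, ∀ u ∈ I, singularValueCurve γ L u = V) ↔ ∀ u ∈ I, sigmaL γ L N u = 0) ∧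
      ∀ V, (∀ u ∈ I, singularValueCurve γ L u = V) → ∀ u ∈ I, mink (γ u - V) (γ u - V) = 0) ∧
    ((∀ u ∈ I, alphaN γ N u ≠ 0) →
      (∀ u ∈ I, deriv (singularValueCurve γ N) u =
        -(sigmaN γ L N u / alphaN γ N u ^ 2) • N u) ∧
      ((∃ V, ∀ u ∈ I, singularValueCurve γ N u = V) ↔ ∀ u ∈ I, sigmaN γ L N u = 0) ∧
      ∀ V, (∀ u ∈ I, singularValueCurve γ N u = V) → ∀ u ∈ I, mink (γ u - V) (γ u - V) = 0) := by
  have hcone {L N : ℝ → R3} (h : LightlikeFrame I γ L N) (V : R3)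
      (hV : ∀ u ∈ I, singularValueCurve γ L u = V) (u : ℝ) (hu : u ∈ I) :
      mink (γ u - V) (γ u - V) = 0 :=
    hV u hu ▸ h.mink_sub_singularValueCurve hu
  have hσ (u : ℝ) (hu : u ∈ I) : sigmaL γ N L u = sigmaN γ L N u := hframe.sigmaL_swap hI hu
  refine ⟨fun hα => ⟨fun u hu => ?_, ?_, hcone hframe⟩,
    fun hα => ⟨fun u hu => ?_, ?_, hcone hframe.swap⟩⟩
  · exact (hframe.hasDerivAt_singularValueCurve hI hu (hα u hu)).deriv
  · exact hframe.singularValueCurve_eq_const_iff hI hconn hα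
  · rw [← hσ u hu]
    exact (hframe.swap.hasDerivAt_singularValueCurve hI hu (hα u hu)).deriv
  · exact (hframe.swap.singularValueCurve_eq_const_iff hI hconn hα).trans
      (forall₂_congr fun u hu => by rw [hσ u hu])

/-- If `α_L` is nowhere zero on `I`, the singular value curve
`u ↦ γ̂(u) + L(u)/α_L(u)` of the osculating lightlike surface has derivative
`-(σ_L/α_L²) L`; it is constant (equal to a point `V_L`) iff `σ_L ≡ 0` on `I`,
in which case `⟨γ̂(u) - V_L, γ̂(u) - V_L⟩ = 0` for all `u ∈ I`, i.e. `γ̂` lies on the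
lightcone with vertex `V_L`. Analogously for `u ↦ γ̂(u) + N(u)/α_N(u)` and `σ_N`. -/
theorem singular_value_curve_and_lightcone (a b : ℝ) (γ L N : ℝ → R3)
    (hframe : LightlikeFrame (Set.Ioo a b) γ L N) :
    (( ∀ u ∈ Set.Ioo a b, alphaL γ L u ≠ 0) →
      (∀ u ∈ Set.Ioo a b,
        deriv (fun u => γ u + (alphaL γ L u)⁻¹ • L u) u =
          (-(sigmaL γ L N u / (alphaL γ L u) ^ 2)) • L u) ∧
      ((∃ V : R3, ∀ u ∈ Set.Ioo a b, γ u + (alphaL γ L u)⁻¹ • L u = V) ↔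
        ∀ u ∈ Set.Ioo a b, sigmaL γ L N u = 0) ∧
      (∀ V : R3, (∀ u ∈ Set.Ioo a b, γ u + (alphaL γ L u)⁻¹ • L u = V) →
        ∀ u ∈ Set.Ioo a b, mink (γ u - V) (γ u - V) = 0)) ∧
    (( ∀ u ∈ Set.Ioo a b, alphaN γ N u ≠ 0) →
      (∀ u ∈ Set.Ioo a b,
        deriv (fun u => γ u + (alphaN γ N u)⁻¹ • N u) u =
          (-(sigmaN γ L N u / (alphaN γ N u) ^ 2)) • N u) ∧
      ((∃ V : R3, ∀ u ∈ Set.Ioo a b, γ u + (alphaN γ N u)⁻¹ • N u = V) ↔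
        ∀ u ∈ Set.Ioo a b, sigmaN γ L N u = 0) ∧
      (∀ V : R3, (∀ u ∈ Set.Ioo a b, γ u + (alphaN γ N u)⁻¹ • N u = V) →
        ∀ u ∈ Set.Ioo a b, mink (γ u - V) (γ u - V) = 0)) :=
  singular_value_curve_and_lightcone_general isOpen_Ioo isPreconnected_Ioo hframe
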